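/- For each ε ∈ {+1, −1}, let Φ_ε = 1⊗1⊗1 + (ε − 1)·e1⊗e1⊗e1 ∈ Q⊗Q⊗Q, α_ε = 1 and β_ε = e0 + ε·e1, where e0 = (1+K²)/2 and e1 = (1−K²)/2. Then (Q, Φ_ε, S, α_ε, β_ε) is a quasi-Hopf algebra: (i) Φ_ε is invertible and counital, i.e. (id⊗ε⊗id)(Φ_ε) = 1⊗1; (ii) (Δ⊗id)(Δ(a)) = Φ_ε · (id⊗Δ)(Δ(a)) · Φ_ε^{-1} for all a ∈ Q; (iii) the 3-cocycle identity (Δ⊗id⊗id)(Φ_ε)·(id⊗id⊗Δ)(Φ_ε) = (Φ_ε⊗1)·(id⊗Δ⊗id)(Φ_ε)·(1⊗Φ_ε) holds; (iv) for all a ∈ Q, writing Δ(a) = Σ a'⊗a'', one has Σ S(a')·a'' = ε(a)·1 and Σ a'·β_ε·S(a'') = ε(a)·β_ε; (v) writing Φ_ε = Σ Φ'⊗Φ''⊗Φ''' and Φ_ε^{-1} = Σ \barΦ'⊗\barΦ''⊗\barΦ''', one has Σ S(Φ')·Φ''·β_ε·S(Φ''') = 1 and Σ \barΦ'·β_ε·S(\barΦ'')·\barΦ'''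 = 1. -/

import Mathlib

open TensorProduct

set_option maxHeartbeats 1000000
set_option synthInstance.maxHeartbeats 400000

noncomputable section

/-- Generators of the restricted quantum group `Q = \bar U_i sl(2)`. -/
inductive QGen : Type
  | E | F | K | Kinv
deriving DecidableEq

/-- The free algebra on the generators. -/
abbrev FA : Type := FreeAlgebra ℂ QGen

def ιE : FA := FreeAlgebra.ι ℂ QGen.E
def ιF : FA := FreeAlgebra.ι ℂ QGen.F
def ιK : FA := FreeAlgebra.ι ℂ QGen.K
def ιKi : FA := FreeAlgebra.ι ℂ QGen.Kinv

/-- Defining relations of `\bar U_i sl(2)` (at `q = i`, i.e. `p = 2`). -/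
inductive QRel : FA → FA → Prop
  | KKi : QRel (ιK * ιKi) 1
  | KiK : QRel (ιKi * ιK) 1
  | KEKi : QRel (ιK * ιE * ιKi) (-ιE)
  | KFKi : QRel (ιK * ιF * ιKi) (-ιF)
  | EF : QRel (ιE * ιF - ιF * ιE) ((2 * Complex.I)⁻¹ • (ιK - ιKi))
  | Esq : QRel (ιE ^ 2) 0
  | Fsq : QRel (ιF ^ 2) 0
  | K4 : QRel (ιK ^ 4) 1

/-- The restricted quantum group `\bar U_i sl(2)`: the quotient of the free algebra
by the two-sided ideal generated by the defining relations. -/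
abbrev Q : Type := RingQuot QRel

def gE : Q := RingQuot.mkAlgHom ℂ QRel ιE
def gF : Q := RingQuot.mkAlgHom ℂ QRel ιF
def gK : Q := RingQuot.mkAlgHom ℂ QRel ιK
def gKi : Q := RingQuot.mkAlgHom ℂ QRel ιKi

section Gadgets

variable (k : Type) [Field k] (A : Type) [Ring A] [Algebra k A]

abbrev TP2 : Type := A ⊗[k] A
abbrev TP3 : Type := A ⊗[k] (A ⊗[k] A)
abbrev TP4 : Type := A ⊗[k] (A ⊗[k] (A ⊗[k] A))

/-- Multiplication `a ⊗ b ↦ a * b`. -/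
def mulA : TP2 k A →ₗ[k] A := LinearMap.mul' k A

/-- Tensor flip `a ⊗ b ↦ b ⊗ a`. -/
def flipA : TP2 k A →ₗ[k] TP2 k A := (TensorProduct.comm k A A).toLinearMap

/-- `a ↦ a ⊗ 1`. -/
def lTen : A →ₗ[k] TP2 k A := (TensorProduct.mk k A A).flip 1

/-- `a ↦ 1 ⊗ a`. -/
def rTen : A →ₗ[k] TP2 k A := TensorProduct.mk k A A 1

/-- `a ⊗ b ↦ a ⊗ b ⊗ 1`. -/
def emb12 : TP2 k A →ₗ[k] TP3 k A := TensorProduct.map LinearMap.id (lTen k A)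

/-- `a ⊗ b ↦ a ⊗ 1 ⊗ b`. -/
def emb13 : TP2 k A →ₗ[k] TP3 k A := TensorProduct.map LinearMap.id (rTen k A)

/-- `a ⊗ b ↦ 1 ⊗ a ⊗ b`. -/
def emb23 : TP2 k A →ₗ[k] TP3 k A := TensorProduct.mk k A (TP2 k A) 1

/-- `a ⊗ b ⊗ c ↦ a ⊗ c ⊗ b`. -/
def perm132 : TP3 k A →ₗ[k] TP3 k A := TensorProduct.map LinearMap.id (flipA k A)

/-- `a ⊗ b ⊗ c ↦ b ⊗ c ⊗ a`. -/
def perm231 : TP3 k A →ₗ[k] TP3 k A :=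
  (TensorProduct.assoc k A A A).toLinearMap ∘ₗ (TensorProduct.comm k A (TP2 k A)).toLinearMap

/-- `a ⊗ b ⊗ c ↦ c ⊗ a ⊗ b`. -/
def perm312 : TP3 k A →ₗ[k] TP3 k A :=
  (TensorProduct.comm k (TP2 k A) A).toLinearMap ∘ₗ (TensorProduct.assoc k A A A).symm.toLinearMap

/-- `a ⊗ b ⊗ c ↦ b ⊗ a ⊗ c`. -/
def perm213 : TP3 k A →ₗ[k] TP3 k A :=
  (TensorProduct.assoc k A A A).toLinearMap ∘ₗ
    (TensorProduct.map (flipA k A) LinearMap.id) ∘ₗ (TensorProduct.assoc k A A A).symm.toLinearMap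

variable {k A}

/-- `(Δ ⊗ id)` on two tensor factors, landing in the triple tensor product. -/
def copL (D : A →ₐ[k] TP2 k A) : TP2 k A →ₗ[k] TP3 k A :=
  (TensorProduct.assoc k A A A).toLinearMap ∘ₗ TensorProduct.map D.toLinearMap LinearMap.id

/-- `(id ⊗ Δ)` on two tensor factors. -/
def copR (D : A →ₐ[k] TP2 k A) : TP2 k A →ₗ[k] TP3 k A :=
  TensorProduct.map LinearMap.id D.toLinearMap

/-- `(ε ⊗ id) : A ⊗ A → A`. -/
def cuL (ce : A →ₐ[k] k) : TP2 k A →ₗ[k] A :=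
  (TensorProduct.lid k A).toLinearMap ∘ₗ TensorProduct.map ce.toLinearMap LinearMap.id

/-- `(id ⊗ ε) : A ⊗ A → A`. -/
def cuR (ce : A →ₐ[k] k) : TP2 k A →ₗ[k] A :=
  (TensorProduct.rid k A).toLinearMap ∘ₗ TensorProduct.map LinearMap.id ce.toLinearMap

/-- `(id ⊗ ε ⊗ id) : A ⊗ A ⊗ A → A ⊗ A`. -/
def cuMid (ce : A →ₐ[k] k) : TP3 k A →ₗ[k] TP2 k A :=
  TensorProduct.map LinearMap.id (cuL ce)

/-- `(Δ ⊗ id ⊗ id)`. -/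
def cop4_1 (D : A →ₐ[k] TP2 k A) : TP3 k A →ₗ[k] TP4 k A :=
  (TensorProduct.assoc k A A (TP2 k A)).toLinearMap ∘ₗ TensorProduct.map D.toLinearMap LinearMap.id

/-- `(id ⊗ Δ ⊗ id)`. -/
def cop4_2 (D : A →ₐ[k] TP2 k A) : TP3 k A →ₗ[k] TP4 k A :=
  TensorProduct.map LinearMap.id (copL D)

/-- `(id ⊗ id ⊗ Δ)`. -/
def cop4_3 (D : A →ₐ[k] TP2 k A) : TP3 k A →ₗ[k] TP4 k A :=
  TensorProduct.map LinearMap.id (copR D)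

/-- `a ⊗ b ⊗ c ↦ a ⊗ b ⊗ c ⊗ 1`, i.e. `Φ ↦ Φ ⊗ 1`. -/
def pad4 : TP3 k A →ₗ[k] TP4 k A :=
  TensorProduct.map LinearMap.id (TensorProduct.map LinearMap.id (lTen k A))

/-- `a ⊗ b ⊗ c ↦ f(a) * g(b) * h(c)`. -/
def tmap3 (f g h : A →ₗ[k] A) : TP3 k A →ₗ[k] A :=
  mulA k A ∘ₗ TensorProduct.map f (mulA k A ∘ₗ TensorProduct.map g h)

/-- `a ⊗ b ↦ S(a) * b`, used in the antipode axiom `m ∘ (S ⊗ id) ∘ Δ = 1·ε`. -/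
def antipL (s : A →ₗ[k] A) : TP2 k A →ₗ[k] A := mulA k A ∘ₗ TensorProduct.map s LinearMap.id

/-- `a ⊗ b ↦ a * S(b)`. -/
def antipR (s : A →ₗ[k] A) : TP2 k A →ₗ[k] A := mulA k A ∘ₗ TensorProduct.map LinearMap.id s

end Gadgets

/-- Central idempotent `e₀ = (1 + K²)/2`. -/
def e0 : Q := (2:ℂ)⁻¹ • (1 + gK ^ 2)

/-- Central idempotent `e₁ = (1 − K²)/2`. -/
def e1 : Q := (2:ℂ)⁻¹ • (1 - gK ^ 2)

/-- `f⁺ = −i F`. -/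
def fp : Q := (-Complex.I) • gF

/-- `f⁻ = E K⁻¹`. -/
def fm : Q := gE * gKi

/-- The Casimir element `C = FE − (i/4)(K − K⁻¹)`. -/
def Cas : Q := gF * gE - (Complex.I / 4) • (gK - gKi)

def t2 (a b : Q) : TP2 ℂ Q := a ⊗ₜ[ℂ] b

def t3 (a b c : Q) : TP3 ℂ Q := a ⊗ₜ[ℂ] (b ⊗ₜ[ℂ] c)

def eEF : Q := gE * gF
def eEK : Q := gE * gK
def eFK : Q := gF * gK
def eEFK : Q := gE * gF * gK

/-- `Φ^{010}` component of the coassociator. -/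
def Phi010 : TP3 ℂ Q :=
  t3 1 1 1 - (1 + Complex.I) • t3 gE gK gF + (1 - Complex.I) • t3 eFK gK eEK
    + (2:ℂ) • t3 eEFK 1 eEFK

/-- `Φ^{101}` component of the coassociator. -/
def Phi101 : TP3 ℂ Q :=
  (Complex.I - 1) • t3 1 gF eEK + t3 1 gK 1 + (2:ℂ) • t3 1 eEF eEFK
    - (1 + Complex.I) • t3 1 eEK gF - (1 + Complex.I) • t3 gE eFK 1
    + (2 * Complex.I) • t3 gE eEFK gF + (1 - Complex.I) • t3 eFK gE 1
    - (2 * Complex.I) • t3 eFK eEFK eEK - (2:ℂ) • t3 eEFK eEF 1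

/-- `Φ^{111}` component of the coassociator. -/
def Phi111 (β : ℂ) : TP3 ℂ Q :=
  (Complex.I * β ^ 2) • (
    (1 + Complex.I) • t3 1 gF eEK - t3 1 gK 1 - (2:ℂ) • t3 1 eEF 1
      - (2 * Complex.I) • t3 1 eEF eEFK + (1 + Complex.I) • t3 1 eEK gF
      - (1 + Complex.I) • t3 gE 1 gF + (1 + Complex.I) • t3 gE eFK 1
      + (2 * Complex.I) • t3 gE eFK eEFK + (2:ℂ) • t3 gE eEFK gF
      - (1 + Complex.I) • t3 eFK 1 eEK + (1 + Complex.I) • t3 eFK gE 1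
      + (2 * Complex.I) • t3 eFK gE eEFK + (2:ℂ) • t3 eFK eEFK eEK
      + (2 * Complex.I) • t3 eEFK gF eEK + (2 * Complex.I) • t3 eEFK gK eEFK
      - (2 * Complex.I) • t3 eEFK eEF 1 + (2 * Complex.I) • t3 eEFK eEK gF
      + (4:ℂ) • t3 eEFK eEF eEFK)

/-- The coassociator `Φ` of the quasi-Hopf algebra structure on `Q`. -/
def Phi (β : ℂ) : TP3 ℂ Q :=
  t3 e0 e0 e0 + t3 e1 e0 e0 + Phi010 * t3 e0 e1 e0 + t3 e0 e0 e1
    + t3 e1 e1 e0 + Phi101 * t3 e1 e0 e1 + t3 e0 e1 e1 + Phi111 β * t3 e1 e1 e1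

def R00 : TP2 ℂ Q :=
  (2:ℂ)⁻¹ • ((t2 1 1 + t2 1 gK + t2 gK 1 - t2 gK gK) * (t2 1 1 + (2 * Complex.I) • t2 gE gF))

def R01 : TP2 ℂ Q :=
  (2:ℂ)⁻¹ • ((t2 1 1 - Complex.I • t2 1 gK + t2 gK 1 + Complex.I • t2 gK gK) *
    (t2 1 1 + (1 - Complex.I) • t2 eFK eEK - (1 - Complex.I) • t2 gE gF
      + (1 + Complex.I) • t2 eEFK 1 + (2 * Complex.I) • t2 eEFK eEFK))

def R10 : TP2 ℂ Q :=
  (2:ℂ)⁻¹ • ((t2 1 1 + t2 1 gK - Complex.I • t2 gK 1 + Complex.I • t2 gK gK) *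
    (t2 1 gK + (1 - Complex.I) • t2 eFK gE + (1 - Complex.I) • t2 gE eFK
      - (1 - Complex.I) • t2 1 eEF - (2 * Complex.I) • t2 eEFK eEF))

def R11 (β : ℂ) : TP2 ℂ Q :=
  (β / 2) • ((t2 1 1 - Complex.I • t2 1 gK - Complex.I • t2 gK 1 + t2 gK gK) *
    ((-Complex.I) • t2 gK 1 + (2 * Complex.I) • t2 eEK gF + (1 - Complex.I) • t2 gK eEFK
      - (1 + Complex.I) • t2 eEF 1 - (2 * Complex.I) • t2 eEF eEFK))

/-- The universal R-matrix `R` of the quasi-triangular quasi-Hopf structure on `Q`. -/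
def Rmat (β : ℂ) : TP2 ℂ Q :=
  R00 * t2 e0 e0 + R01 * t2 e0 e1 + R10 * t2 e1 e0 + R11 β * t2 e1 e1

/-- The standard R-matrix `R_st` of the quotient `Q/(K²-1)`. -/
def Rst : TP2 ℂ Q :=
  (2:ℂ)⁻¹ • ∑ m ∈ Finset.range 2, ∑ n ∈ Finset.range 2,
    ((-1:ℂ) ^ (m * n)) • (t2 (gK ^ m) (gK ^ n) * (t2 1 1 + (2 * Complex.I) • t2 gE gF))

/-- The monodromy matrix `M = R₂₁ · R`. -/
def Mmat (β : ℂ) : TP2 ℂ Q := flipA ℂ Q (Rmat β) * Rmat β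

/-- The ribbon element `v = (e₀ − iβ K e₁)(1 − 2 f⁺ f⁻)`. -/
def vRib (β : ℂ) : Q := (e0 - (Complex.I * β) • (gK * e1)) * (1 - (2:ℂ) • (fp * fm))

/-- The coevaluation element `β = e₀ − 2iβ² C e₁`. -/
def bbEl (β : ℂ) : Q := e0 - (2 * Complex.I * β ^ 2) • (Cas * e1)

/-- `b ⊗ c ↦ S(b · bb · S(c))`, inner part of the Drinfeld element. -/
def uInner (S : Q →ₗ[ℂ] Q) (bb : Q) : TP2 ℂ Q →ₗ[ℂ] Q :=
  S ∘ₗ mulA ℂ Q ∘ₗ TensorProduct.map (LinearMap.mulRight ℂ bb) S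

/-- `Φ' ⊗ Φ'' ⊗ Φ''' ↦ S(Φ'' · bb · S(Φ''')) ⊗ Φ'`. -/
def uMap1 (S : Q →ₗ[ℂ] Q) (bb : Q) : TP3 ℂ Q →ₗ[ℂ] TP2 ℂ Q :=
  TensorProduct.map (uInner S bb) LinearMap.id ∘ₗ (TensorProduct.comm ℂ Q (TP2 ℂ Q)).toLinearMap

/-- `R' ⊗ R'' ↦ S(R'') · al · R'`. -/
def uMap2 (S : Q →ₗ[ℂ] Q) (al : Q) : TP2 ℂ Q →ₗ[ℂ] Q :=
  mulA ℂ Q ∘ₗ TensorProduct.map (LinearMap.mulRight ℂ al ∘ₗ S) LinearMap.id ∘ₗ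
    (TensorProduct.comm ℂ Q Q).toLinearMap

/-- `(x ⊗ a) ⊗ (R' ⊗ R'') ↦ x · (S(R'') · al · R') · a`. -/
def uBig (S : Q →ₗ[ℂ] Q) (al : Q) : TP2 ℂ Q ⊗[ℂ] TP2 ℂ Q →ₗ[ℂ] Q :=
  mulA ℂ Q ∘ₗ TensorProduct.map LinearMap.id (mulA ℂ Q ∘ₗ (TensorProduct.comm ℂ Q Q).toLinearMap)
    ∘ₗ (TensorProduct.assoc ℂ Q Q Q).toLinearMap ∘ₗ TensorProduct.map LinearMap.id (uMap2 S al)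

/-- The Drinfeld element `u = Σ S(Φ''·b·S(Φ'''))·S(R'')·α·R'·Φ'` (with `α = 1`). -/
def uDrin (β : ℂ) (S : Q →ₗ[ℂ] Q) : Q :=
  uBig S 1 (uMap1 S (bbEl β) (Phi β) ⊗ₜ[ℂ] Rmat β)

/-- The balancing element `g = b · S(α) · v⁻¹ · u` (with `α = 1`). -/
def balG (β : ℂ) (S : Q →ₗ[ℂ] Q) : Q :=
  bbEl β * S 1 * Ring.inverse (vRib β) * uDrin β S

/-- The cointegral `c = (β²/i)·E·F·(1 + K + K² + K³)`. -/
def cInt (β : ℂ) : Q := (β ^ 2 / Complex.I) • (gE * gF * (1 + gK + gK ^ 2 + gK ^ 3))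

/-- The q-trace of a one-dimensional representation, with balancing element `K⁻¹`. -/
def qTr1 (ρ : Q →ₐ[ℂ] ℂ) : Q →ₗ[ℂ] ℂ := ρ.toLinearMap ∘ₗ LinearMap.mulLeft ℂ gK

/-- The q-trace of a two-dimensional (matrix) representation, with balancing element `K⁻¹`. -/
def qTrM (ρ : Q →ₐ[ℂ] Matrix (Fin 2) (Fin 2) ℂ) : Q →ₗ[ℂ] ℂ :=
  Matrix.traceLinearMap (Fin 2) ℂ ℂ ∘ₗ ρ.toLinearMap ∘ₗ LinearMap.mulLeft ℂ gK

/-- The Drinfeld mapping `φ ↦ (φ ⊗ id)(M)`. -/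
def drinfeldImg (β : ℂ) (φ : Q →ₗ[ℂ] ℂ) : Q :=
  (TensorProduct.lid ℂ Q) (TensorProduct.map φ LinearMap.id (Mmat β))

theorem q_neg_mul (a b : Q) : -a * b = -(a * b) := neg_mul a b

theorem q_mul_neg (a b : Q) : a * -b = -(a * b) := mul_neg a b

theorem q_neg_neg (a : Q) : - -a = a := neg_neg a

theorem q_add_neg_cancel (a : Q) : a + -a = 0 := add_neg_cancel a

theorem q_neg_add_cancel (a : Q) : -a + a = 0 := neg_add_cancel a

theorem q_KKi : gK * gKi = 1 := by
  have := RingQuot.mkAlgHom_rel ℂ QRel.KKi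
  simp only [map_mul, map_one] at this
  exact this

theorem q_KiK : gKi * gK = 1 := by
  have := RingQuot.mkAlgHom_rel ℂ QRel.KiK
  simp only [map_mul, map_one] at this
  exact this

theorem q_KE : gK * gE = -(gE * gK) := by
  have h : gK * gE * gKi = -gE := by
    have := RingQuot.mkAlgHom_rel ℂ QRel.KEKi
    simp only [map_mul, map_neg] at this
    exact this
  calc gK * gE = gK * gE * gKi * gK := by rw [mul_assoc (gK * gE), q_KiK, mul_one]
    _ = _ := by rw [h, q_neg_mul]

theorem q_KF : gK * gF = -(gF * gK) := by
  have h : gK * gF * gKi = -gF := by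
    have := RingQuot.mkAlgHom_rel ℂ QRel.KFKi
    simp only [map_mul, map_neg] at this
    exact this
  calc gK * gF = gK * gF * gKi * gK := by rw [mul_assoc (gK * gF), q_KiK, mul_one]
    _ = _ := by rw [h, q_neg_mul]

theorem q_K4 : gK ^ 4 = 1 := by
  have := RingQuot.mkAlgHom_rel ℂ QRel.K4
  simp only [map_pow, map_one] at this
  exact this

theorem q_Ki : gKi = gK ^ 3 := by
  calc gKi = gKi * gK ^ 4 := by rw [q_K4, mul_one]
    _ = gKi * gK * gK ^ 3 := by rw [mul_assoc, ← pow_succ']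
    _ = _ := by rw [q_KiK, one_mul]

theorem q_ind {p : Q → Prop} (hs : ∀ c : ℂ, p (c • 1)) (hE : p gE) (hF : p gF) (hK : p gK)
    (hKi : p gKi) (hadd : ∀ a b, p a → p b → p (a + b)) (hmul : ∀ a b, p a → p b → p (a * b))
    (a : Q) : p a := by
  obtain ⟨x, rfl⟩ := RingQuot.mkAlgHom_surjective ℂ QRel a
  induction x using FreeAlgebra.induction with
  | grade0 r =>
    rw [AlgHom.commutes, Algebra.algebraMap_eq_smul_one]; exact hs r
  | grade1 g => cases g <;> assumption
  | mul a b ha hb => rw [map_mul]; exact hmul _ _ ha hb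
  | add a b ha hb => rw [map_add]; exact hadd _ _ ha hb

theorem q_K2_comm (a : Q) : Commute (gK ^ 2) a := by
  induction a using q_ind with
  | hs c => exact (Commute.one_right _).smul_right c
  | hE =>
    show gK ^ 2 * gE = gE * gK ^ 2
    rw [pow_two, mul_assoc, q_KE, q_mul_neg, ← mul_assoc, q_KE, q_neg_mul, q_neg_neg, mul_assoc]
  | hF =>
    show gK ^ 2 * gF = gF * gK ^ 2
    rw [pow_two, mul_assoc, q_KF, q_mul_neg, ← mul_assoc, q_KF, q_neg_mul, q_neg_neg, mul_assoc]
  | hK => exact Commute.pow_self _ _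
  | hKi => rw [q_Ki]; exact Commute.pow_pow_self _ _ _
  | hadd a b ha hb => exact ha.add_right hb
  | hmul a b ha hb => exact ha.mul_right hb

theorem q_e1_comm (a : Q) : Commute e1 a := by
  unfold e1
  exact ((Commute.one_left a).sub_left (q_K2_comm a)).smul_left _

theorem q_e0 : e0 = 1 - e1 := by
  unfold e0 e1; module

theorem q_e1_sq : e1 * e1 = e1 := by
  unfold e1
  have h : gK ^ 2 * gK ^ 2 = 1 := by rw [← pow_add]; exact q_K4
  rw [smul_mul_smul_comm, sub_mul, mul_sub, mul_sub, h, mul_one, mul_one, one_mul]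
  module

theorem q_P_comm (t : TP3 ℂ Q) : Commute (t3 e1 e1 e1) t := by
  unfold t3
  induction t using TensorProduct.induction_on with
  | zero => exact Commute.zero_right _
  | add a b ha hb => exact ha.add_right hb
  | tmul a t =>
    induction t using TensorProduct.induction_on with
    | zero => rw [TensorProduct.tmul_zero]; exact Commute.zero_right _
    | add x y hx hy => rw [TensorProduct.tmul_add]; exact hx.add_right hy
    | tmul b c =>
      show _ * _ = _ * _
      simp only [Algebra.TensorProduct.tmul_mul_tmul, (q_e1_comm _).eq]

theorem q_P_sq : t3 e1 e1 e1 * t3 e1 e1 e1 = t3 e1 e1 e1 := by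
  simp only [t3, Algebra.TensorProduct.tmul_mul_tmul, q_e1_sq]

theorem q_Phi_sq (ep : ℂ) (hep : ep = 1 ∨ ep = -1) :
    ((1 : TP3 ℂ Q) + (ep - 1) • t3 e1 e1 e1) * ((1 : TP3 ℂ Q) + (ep - 1) • t3 e1 e1 e1) = 1 := by
  rw [add_mul, mul_add, mul_add, smul_mul_smul_comm, q_P_sq, one_mul, mul_one, one_mul]
  rcases hep with rfl | rfl <;> module

theorem q_Phi_inv (ep : ℂ) (hep : ep = 1 ∨ ep = -1) :
    Ring.inverse ((1 : TP3 ℂ Q) + (ep - 1) • t3 e1 e1 e1) =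
      (1 : TP3 ℂ Q) + (ep - 1) • t3 e1 e1 e1 :=
  Ring.inverse_unit (⟨_, _, q_Phi_sq ep hep, q_Phi_sq ep hep⟩ : (TP3 ℂ Q)ˣ)

theorem q_copL_eq (Δ : Q →ₐ[ℂ] TP2 ℂ Q) (t : TP2 ℂ Q) :
    copL Δ t = ((Algebra.TensorProduct.assoc ℂ ℂ ℂ Q Q Q).toAlgHom.comp
      (Algebra.TensorProduct.map Δ (AlgHom.id ℂ Q))) t := by
  induction t using TensorProduct.induction_on with
  | zero => simp only [map_zero]
  | add a b ha hb => simp only [map_add, ha, hb]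
  | tmul a b => rfl

theorem q_copR_eq (Δ : Q →ₐ[ℂ] TP2 ℂ Q) (t : TP2 ℂ Q) :
    copR Δ t = (Algebra.TensorProduct.map (AlgHom.id ℂ Q) Δ) t := by
  induction t using TensorProduct.induction_on with
  | zero => simp only [map_zero]
  | add a b ha hb => simp only [map_add, ha, hb]
  | tmul a b => rfl

theorem copL_tmul (Δ : Q →ₐ[ℂ] TP2 ℂ Q) (a b : Q) :
    copL Δ (a ⊗ₜ b) = TensorProduct.assoc ℂ Q Q Q (Δ a ⊗ₜ b) := rfl

theorem copR_tmul (Δ : Q →ₐ[ℂ] TP2 ℂ Q) (a b : Q) :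
    copR Δ (a ⊗ₜ b) = a ⊗ₜ Δ b := rfl

theorem q_DKi (Δ : Q →ₐ[ℂ] TP2 ℂ Q) (hΔK : Δ gK = gK ⊗ₜ[ℂ] gK) :
    Δ gKi = gKi ⊗ₜ[ℂ] gKi := by
  rw [q_Ki, map_pow, hΔK, Algebra.TensorProduct.tmul_pow]

theorem q_coassoc (Δ : Q →ₐ[ℂ] TP2 ℂ Q)
    (hΔE : Δ gE = (1:Q) ⊗ₜ[ℂ] gE + gE ⊗ₜ[ℂ] gK)
    (hΔF : Δ gF = gKi ⊗ₜ[ℂ] gF + gF ⊗ₜ[ℂ] (1:Q))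
    (hΔK : Δ gK = gK ⊗ₜ[ℂ] gK) (a : Q) : copL Δ (Δ a) = copR Δ (Δ a) := by
  have hKi := q_DKi Δ hΔK
  have h1 : Δ 1 = (1 : Q) ⊗ₜ[ℂ] (1 : Q) := map_one Δ
  induction a using q_ind with
  | hs c => simp only [map_smul, h1, copL_tmul, copR_tmul, TensorProduct.assoc_tmul]
  | hE =>
    simp only [hΔE, map_add, copL_tmul, copR_tmul, h1, hΔK, TensorProduct.add_tmul,
      TensorProduct.tmul_add, TensorProduct.assoc_tmul, add_assoc]
  | hF =>
    simp only [hΔF, map_add, copL_tmul, copR_tmul, h1, hKi, TensorProduct.add_tmul,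
      TensorProduct.tmul_add, TensorProduct.assoc_tmul, add_assoc]
  | hK => simp only [hΔK, copL_tmul, copR_tmul, TensorProduct.assoc_tmul]
  | hKi => simp only [hKi, copL_tmul, copR_tmul, TensorProduct.assoc_tmul]
  | hadd a b ha hb => simp only [map_add, ha, hb]
  | hmul a b ha hb =>
    rw [q_copL_eq, q_copR_eq] at ha hb ⊢
    rw [map_mul, map_mul, map_mul, ha, hb]

theorem antipL_tmul (s : Q →ₗ[ℂ] Q) (a b : Q) : antipL s (a ⊗ₜ b) = s a * b := rfl

theorem antipR_tmul (s : Q →ₗ[ℂ] Q) (a b : Q) : antipR s (a ⊗ₜ b) = a * s b := rfl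

theorem q_antipL_mul (S : Q →ₗ[ℂ] Q) (hSmul : ∀ a b : Q, S (a * b) = S b * S a)
    (t : TP2 ℂ Q) (c : ℂ) (ht : antipL S t = c • 1) (u : TP2 ℂ Q) :
    antipL S (t * u) = c • antipL S u := by
  induction u using TensorProduct.induction_on with
  | zero => simp only [mul_zero, map_zero, smul_zero]
  | add a b ha hb => rw [mul_add, map_add, map_add, ha, hb, smul_add]
  | tmul x y =>
    have key : antipL S (t * x ⊗ₜ y) = S x * antipL S t * y := by
      clear ht
      induction t using TensorProduct.induction_on with
      | zero => simp only [mul_zero, zero_mul, map_zero]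
      | add a b ha hb => rw [add_mul, map_add, map_add, ha, hb, mul_add, add_mul]
      | tmul a b =>
        rw [Algebra.TensorProduct.tmul_mul_tmul, antipL_tmul, antipL_tmul, hSmul]
        simp only [mul_assoc]
    rw [key, ht, antipL_tmul, mul_smul_comm, mul_one, smul_mul_assoc]

theorem q_antipR_mul (S : Q →ₗ[ℂ] Q) (hSmul : ∀ a b : Q, S (a * b) = S b * S a) (β : Q)
    (u : TP2 ℂ Q) (c : ℂ) (hu : antipR (LinearMap.mulLeft ℂ β ∘ₗ S) u = c • β) (t : TP2 ℂ Q) :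
    antipR (LinearMap.mulLeft ℂ β ∘ₗ S) (t * u) =
      c • antipR (LinearMap.mulLeft ℂ β ∘ₗ S) t := by
  induction t using TensorProduct.induction_on with
  | zero => simp only [zero_mul, map_zero, smul_zero]
  | add a b ha hb => rw [add_mul, map_add, map_add, ha, hb, smul_add]
  | tmul x y =>
    have key : antipR (LinearMap.mulLeft ℂ β ∘ₗ S) (x ⊗ₜ y * u) =
        x * antipR (LinearMap.mulLeft ℂ β ∘ₗ S) u * S y := by
      clear hu
      induction u using TensorProduct.induction_on with
      | zero => simp only [mul_zero, zero_mul, map_zero]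
      | add a b ha hb => rw [mul_add, map_add, map_add, ha, hb, mul_add, add_mul]
      | tmul a b =>
        rw [Algebra.TensorProduct.tmul_mul_tmul, antipR_tmul, antipR_tmul]
        simp only [LinearMap.comp_apply, LinearMap.mulLeft_apply, hSmul, mul_assoc]
    rw [key, hu, antipR_tmul, mul_smul_comm, smul_mul_assoc]
    simp only [LinearMap.comp_apply, LinearMap.mulLeft_apply, mul_assoc]

theorem q_De1 (Δ : Q →ₐ[ℂ] TP2 ℂ Q) (hΔK : Δ gK = gK ⊗ₜ[ℂ] gK) :
    Δ e1 = (1:Q) ⊗ₜ[ℂ] e1 + e1 ⊗ₜ[ℂ] (1:Q) - (2:ℂ) • (e1 ⊗ₜ[ℂ] e1) := by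
  have hK : gK ^ 2 = 1 - (2:ℂ) • e1 := by unfold e1; module
  have h : Δ (gK ^ 2) = (gK ^ 2) ⊗ₜ[ℂ] (gK ^ 2) := by
    rw [map_pow, hΔK, Algebra.TensorProduct.tmul_pow]
  have h1 : Δ 1 = (1 : Q) ⊗ₜ[ℂ] (1 : Q) := map_one Δ
  have h2 : Δ e1 = (2:ℂ)⁻¹ • (Δ 1 - Δ (gK ^ 2)) := by rw [← map_sub, ← map_smul]; rfl
  rw [h2, h, h1, hK]
  simp only [TensorProduct.sub_tmul, TensorProduct.tmul_sub, ← TensorProduct.smul_tmul',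
    TensorProduct.tmul_smul]
  module

theorem q_Ke1 : gK ^ 2 = 1 - (2:ℂ) • e1 := by unfold e1; module

theorem q_Se1 (S : Q →ₗ[ℂ] Q) (hS1 : S 1 = 1) (hSmul : ∀ a b : Q, S (a * b) = S b * S a)
    (hSK : S gK = gKi) : S e1 = e1 := by
  have h : S (gK ^ 2) = gK ^ 2 := by
    rw [pow_two, hSmul, hSK, q_Ki, ← pow_add, ← pow_two]
    calc gK ^ (3 + 3) = gK ^ 4 * gK ^ 2 := by rw [← pow_add]
      _ = _ := by rw [q_K4, one_mul]
  unfold e1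
  rw [map_smul, map_sub, hS1, h]

theorem q_ce1 (ce : Q →ₐ[ℂ] ℂ) (hceK : ce gK = 1) : ce e1 = 0 := by
  unfold e1
  rw [map_smul, map_sub, map_one, map_pow, hceK]; simp

theorem q_ceKi (ce : Q →ₐ[ℂ] ℂ) (hceK : ce gK = 1) : ce gKi = 1 := by
  rw [q_Ki, map_pow, hceK, one_pow]

theorem q_SKi (S : Q →ₗ[ℂ] Q) (hSmul : ∀ a b : Q, S (a * b) = S b * S a)
    (hSK : S gK = gKi) : S gKi = gK := by
  rw [q_Ki, pow_succ, pow_two, hSmul, hSmul, hSK, q_Ki, ← pow_add, ← pow_add]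
  calc gK ^ (3 + (3 + 3)) = gK ^ 4 * gK ^ 4 * gK := by rw [← pow_add, ← pow_succ]
    _ = _ := by rw [q_K4, one_mul, one_mul]

theorem gen_cocycle {A : Type} [Ring A] [Algebra ℂ A] (Δ : A →ₐ[ℂ] TP2 ℂ A) (e : A)
    (he : e * e = e)
    (hD : Δ e = (1:A) ⊗ₜ[ℂ] e + e ⊗ₜ[ℂ] (1:A) - (2:ℂ) • (e ⊗ₜ[ℂ] e))
    (ep : ℂ) (hep : ep = 1 ∨ ep = -1) :
    cop4_1 Δ ((1 : TP3 ℂ A) + (ep - 1) • (e ⊗ₜ[ℂ] (e ⊗ₜ[ℂ] e))) *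
        cop4_3 Δ ((1 : TP3 ℂ A) + (ep - 1) • (e ⊗ₜ[ℂ] (e ⊗ₜ[ℂ] e))) =
      pad4 ((1 : TP3 ℂ A) + (ep - 1) • (e ⊗ₜ[ℂ] (e ⊗ₜ[ℂ] e))) *
        cop4_2 Δ ((1 : TP3 ℂ A) + (ep - 1) • (e ⊗ₜ[ℂ] (e ⊗ₜ[ℂ] e))) *
        ((1:A) ⊗ₜ[ℂ] ((1 : TP3 ℂ A) + (ep - 1) • (e ⊗ₜ[ℂ] (e ⊗ₜ[ℂ] e)))) := by
  have h1 : Δ 1 = (1 : A) ⊗ₜ[ℂ] (1 : A) := map_one Δ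
  have o3 : (1 : TP3 ℂ A) = (1:A) ⊗ₜ[ℂ] ((1:A) ⊗ₜ[ℂ] (1:A)) := rfl
  have c1 (a b c : A) : cop4_1 Δ (a ⊗ₜ (b ⊗ₜ c)) =
    TensorProduct.assoc ℂ A A (TP2 ℂ A) (Δ a ⊗ₜ (b ⊗ₜ c)) := rfl
  have c2 (a b c : A) : cop4_2 Δ (a ⊗ₜ (b ⊗ₜ c)) =
    a ⊗ₜ (TensorProduct.assoc ℂ A A A (Δ b ⊗ₜ c)) := rfl
  have c3 (a b c : A) : cop4_3 Δ (a ⊗ₜ (b ⊗ₜ c)) = a ⊗ₜ (b ⊗ₜ Δ c) := rfl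
  have c4 (a b c : A) : pad4 (k := ℂ) (a ⊗ₜ (b ⊗ₜ c)) = a ⊗ₜ[ℂ] (b ⊗ₜ[ℂ] (c ⊗ₜ[ℂ] (1:A))) := rfl
  simp only [o3, map_add, map_smul, map_sub, c1, c2, c3, c4, hD, h1,
    TensorProduct.add_tmul, TensorProduct.sub_tmul, TensorProduct.tmul_add,
    TensorProduct.tmul_sub, TensorProduct.assoc_tmul, ← TensorProduct.smul_tmul',
    TensorProduct.tmul_smul]
  rcases hep with rfl | rfl
  · simp only [sub_self, zero_smul, add_zero, Algebra.TensorProduct.tmul_mul_tmul, mul_one]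
  · have m1 (x y z : TP4 ℂ A) : x * (y + z) = x * y + x * z := by
      have := Distrib.left_distrib (R := TP4 ℂ A) x y z
      exact this
    have m2 (x y z : TP4 ℂ A) : (x + y) * z = x * z + y * z := by
      have := Distrib.right_distrib (R := TP4 ℂ A) x y z
      exact this
    have m3 (x y z : TP4 ℂ A) : x * (y - z) = x * y - x * z := mul_sub x y z
    have m4 (x y z : TP4 ℂ A) : (x - y) * z = x * z - y * z := sub_mul x y z
    have m5 (c : ℂ) (x y : TP4 ℂ A) : (c • x) * y = c • (x * y) := smul_mul_assoc c x y
    have m6 (c : ℂ) (x y : TP4 ℂ A) : x * (c • y) = c • (x * y) := mul_smul_comm c x y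
    have m7 (a b c d a2 b2 c2 d2 : A) :
        (a ⊗ₜ[ℂ] (b ⊗ₜ[ℂ] (c ⊗ₜ[ℂ] d)) : TP4 ℂ A) * (a2 ⊗ₜ[ℂ] (b2 ⊗ₜ[ℂ] (c2 ⊗ₜ[ℂ] d2))) =
          (a * a2) ⊗ₜ[ℂ] ((b * b2) ⊗ₜ[ℂ] ((c * c2) ⊗ₜ[ℂ] (d * d2))) := by
      have k : (b ⊗ₜ[ℂ] (c ⊗ₜ[ℂ] d) : TP3 ℂ A) * (b2 ⊗ₜ[ℂ] (c2 ⊗ₜ[ℂ] d2)) =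
          (b * b2) ⊗ₜ[ℂ] ((c * c2) ⊗ₜ[ℂ] (d * d2)) := by
        simp only [Algebra.TensorProduct.tmul_mul_tmul]
      rw [← k]
      exact Algebra.TensorProduct.tmul_mul_tmul a a2 _ _
    simp only [m1, m2, m3, m4, m5, m6, m7, mul_one, one_mul, he]
    module

/-- `(Q, Φ_ε, S, α_ε = 1, β_ε = e₀ + ε e₁)` is a quasi-Hopf algebra
for `ε = ±1`, where `Φ_ε = 1⊗1⊗1 + (ε−1)·e₁⊗e₁⊗e₁`. -/
theorem statement5 (Δ : Q →ₐ[ℂ] TP2 ℂ Q)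
    (hΔE : Δ gE = (1:Q) ⊗ₜ[ℂ] gE + gE ⊗ₜ[ℂ] gK)
    (hΔF : Δ gF = gKi ⊗ₜ[ℂ] gF + gF ⊗ₜ[ℂ] (1:Q))
    (hΔK : Δ gK = gK ⊗ₜ[ℂ] gK)
    (ce : Q →ₐ[ℂ] ℂ) (hceE : ce gE = 0) (hceF : ce gF = 0) (hceK : ce gK = 1)
    (S : Q →ₗ[ℂ] Q) (hS1 : S 1 = 1) (hSmul : ∀ a b : Q, S (a * b) = S b * S a)
    (hSE : S gE = -(gE * gKi)) (hSF : S gF = -(gK * gF)) (hSK : S gK = gKi)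
    (ep : ℂ) (hep : ep = 1 ∨ ep = -1) :
    IsUnit ((1 : TP3 ℂ Q) + (ep - 1) • t3 e1 e1 e1) ∧
    cuMid ce ((1 : TP3 ℂ Q) + (ep - 1) • t3 e1 e1 e1) = 1 ∧
    (∀ a : Q, copL Δ (Δ a) =
      ((1 : TP3 ℂ Q) + (ep - 1) • t3 e1 e1 e1) * copR Δ (Δ a) *
        Ring.inverse ((1 : TP3 ℂ Q) + (ep - 1) • t3 e1 e1 e1)) ∧
    cop4_1 Δ ((1 : TP3 ℂ Q) + (ep - 1) • t3 e1 e1 e1) *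
        cop4_3 Δ ((1 : TP3 ℂ Q) + (ep - 1) • t3 e1 e1 e1) =
      pad4 ((1 : TP3 ℂ Q) + (ep - 1) • t3 e1 e1 e1) *
        cop4_2 Δ ((1 : TP3 ℂ Q) + (ep - 1) • t3 e1 e1 e1) *
        ((1:Q) ⊗ₜ[ℂ] ((1 : TP3 ℂ Q) + (ep - 1) • t3 e1 e1 e1)) ∧
    (∀ a : Q, antipL S (Δ a) = ce a • (1:Q)) ∧
    (∀ a : Q,
      antipR (LinearMap.mulLeft ℂ (e0 + ep • e1) ∘ₗ S) (Δ a) = ce a • (e0 + ep • e1)) ∧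
    tmap3 S LinearMap.id (LinearMap.mulLeft ℂ (e0 + ep • e1) ∘ₗ S)
      ((1 : TP3 ℂ Q) + (ep - 1) • t3 e1 e1 e1) = 1 ∧
    tmap3 LinearMap.id (LinearMap.mulLeft ℂ (e0 + ep • e1) ∘ₗ S) LinearMap.id
      (Ring.inverse ((1 : TP3 ℂ Q) + (ep - 1) • t3 e1 e1 e1)) = 1 := by
  have hSe1 := q_Se1 S hS1 hSmul hSK
  have hsq : ep * ep = 1 := by rcases hep with rfl | rfl <;> norm_num
  have h1 : Δ 1 = (1 : Q) ⊗ₜ[ℂ] (1 : Q) := map_one Δ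
  have o3 : (1 : TP3 ℂ Q) = (1:Q) ⊗ₜ[ℂ] ((1:Q) ⊗ₜ[ℂ] (1:Q)) := rfl
  have hKi := q_DKi Δ hΔK
  have hSKi := q_SKi S hSmul hSK
  have hceKi := q_ceKi ce hceK
  have hβ : ∀ a, Commute (e0 + ep • e1) a := by
    intro a
    rw [q_e0]
    exact ((Commute.one_left a).sub_left (q_e1_comm a)).add_left ((q_e1_comm a).smul_left _)
  refine ⟨?_, ?_, ?_, gen_cocycle Δ e1 q_e1_sq (q_De1 Δ hΔK) ep hep, ?_, ?_, ?_, ?_⟩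
  · exact (⟨_, _, q_Phi_sq ep hep, q_Phi_sq ep hep⟩ : (TP3 ℂ Q)ˣ).isUnit
  · have c (a b c : Q) : cuMid ce (a ⊗ₜ (b ⊗ₜ c)) = a ⊗ₜ (ce b • c) := rfl
    rw [map_add, map_smul, t3, o3, c, c, q_ce1 ce hceK, map_one, zero_smul, one_smul,
      TensorProduct.tmul_zero, smul_zero, add_zero]
    rfl
  · intro a
    have hc : Commute ((1 : TP3 ℂ Q) + (ep - 1) • t3 e1 e1 e1) (copR Δ (Δ a)) :=
      (Commute.one_left _).add_left ((q_P_comm _).smul_left _)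
    rw [q_Phi_inv ep hep, hc.eq, mul_assoc, q_Phi_sq ep hep, mul_one]
    exact q_coassoc Δ hΔE hΔF hΔK a
  · intro a
    induction a using q_ind with
    | hs c => rw [map_smul, map_smul, map_smul, h1, antipL_tmul, hS1, map_one, mul_one,
        smul_eq_mul, mul_one]
    | hE =>
      rw [hΔE, map_add, antipL_tmul, antipL_tmul, hS1, hSE, hceE, one_mul, q_neg_mul, mul_assoc,
        q_KiK, mul_one, q_add_neg_cancel, zero_smul]
    | hF =>
      rw [hΔF, map_add, antipL_tmul, antipL_tmul, hSKi, hSF, hceF, mul_one, q_add_neg_cancel,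
        zero_smul]
    | hK => rw [hΔK, antipL_tmul, hSK, q_KiK, hceK, one_smul]
    | hKi => rw [hKi, antipL_tmul, hSKi, q_KKi, hceKi, one_smul]
    | hadd a b ha hb => rw [map_add, map_add, map_add, ha, hb, add_smul]
    | hmul a b ha hb =>
      rw [map_mul Δ, map_mul ce, q_antipL_mul S hSmul _ _ ha, hb, smul_smul]
  · intro a
    generalize (e0 + ep • e1) = β at hβ
    induction a using q_ind with
    | hs c =>
      rw [map_smul, map_smul, map_smul, h1, antipR_tmul, LinearMap.comp_apply,
        LinearMap.mulLeft_apply, hS1, map_one, mul_one, one_mul, smul_eq_mul, mul_one]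
    | hE =>
      rw [hΔE, map_add, antipR_tmul, antipR_tmul, hceE]
      simp only [LinearMap.comp_apply, LinearMap.mulLeft_apply, hSE, hSK, one_mul, zero_smul]
      rw [q_mul_neg, ← mul_assoc, ← mul_assoc, (hβ gE).eq, q_neg_add_cancel]
    | hF =>
      rw [hΔF, map_add, antipR_tmul, antipR_tmul, hceF]
      simp only [LinearMap.comp_apply, LinearMap.mulLeft_apply, hSF, hS1, mul_one, zero_smul]
      rw [(hβ _).eq, q_neg_mul, q_mul_neg, ← mul_assoc, ← mul_assoc, q_KiK, one_mul,
        q_neg_add_cancel]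
    | hK =>
      rw [hΔK, antipR_tmul, LinearMap.comp_apply, LinearMap.mulLeft_apply, hSK, (hβ _).eq,
        ← mul_assoc, q_KKi, one_mul, hceK, one_smul]
    | hKi =>
      rw [hKi, antipR_tmul, LinearMap.comp_apply, LinearMap.mulLeft_apply, hSKi, (hβ _).eq,
        ← mul_assoc, q_KiK, one_mul, hceKi, one_smul]
    | hadd a b ha hb => rw [map_add, map_add, map_add, ha, hb, add_smul]
    | hmul a b ha hb =>
      rw [map_mul Δ, map_mul ce, q_antipR_mul S hSmul _ _ _ hb, ha, smul_smul, mul_comm]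
  · have c (f g h : Q →ₗ[ℂ] Q) (a b c : Q) :
      tmap3 f g h (a ⊗ₜ (b ⊗ₜ c)) = f a * (g b * h c) := rfl
    rw [map_add, map_smul, t3, o3, c, c]
    simp only [LinearMap.comp_apply, LinearMap.mulLeft_apply, LinearMap.id_apply, hS1, hSe1,
      q_e0, mul_one, one_mul, mul_add, add_mul, mul_sub, sub_mul, smul_mul_assoc, mul_smul_comm,
      q_e1_sq, sub_self, zero_add]
    rcases hep with rfl | rfl <;> module
  · rw [q_Phi_inv ep hep]
    have c (f g h : Q →ₗ[ℂ] Q) (a b c : Q) :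
      tmap3 f g h (a ⊗ₜ (b ⊗ₜ c)) = f a * (g b * h c) := rfl
    rw [map_add, map_smul, t3, o3, c, c]
    simp only [LinearMap.comp_apply, LinearMap.mulLeft_apply, LinearMap.id_apply, hS1, hSe1,
      q_e0, mul_one, one_mul, mul_add, add_mul, mul_sub, sub_mul, smul_mul_assoc, mul_smul_comm,
      q_e1_sq, sub_self, zero_add]
    rcases hep with rfl | rfl <;> module
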